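/- arXiv:hep-th/9608067 — 4 statements merged into one kernel-verified Lean document; each statement's English description precedes it below -/
import Mathlib

section
/- Small rescalings of superposed configurations are configurations: let a : Fin l → ℝ^m be injective and let b i : Fin (k i) → ℝ^m be injective for each i : Fin l. Then there exists ε > 0 such that for every t : Fin l → ℝ with 0 < t i < ε for all i, the tuple (Σ i, Fin (k i)) → ℝ^m given by ⟨i, j⟩ ↦ a i + t i • b i j is injective. -/
/-- Small rescalings of superposed configurations are configurations: if `a`
and all the `b i` are injective, then there is an `ε > 0` such that for all
scaling factors `0 < t i < ε` the tuple `⟨i, j⟩ ↦ a i + t i • b i j` is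
injective. -/
theorem superComp_smul_injective (m l : ℕ) (k : Fin l → ℕ)
    (a : Fin l → EuclideanSpace ℝ (Fin m)) (ha : Function.Injective a)
    (b : ∀ i : Fin l, Fin (k i) → EuclideanSpace ℝ (Fin m))
    (hb : ∀ i : Fin l, Function.Injective (b i)) :
    ∃ ε > (0 : ℝ), ∀ t : Fin l → ℝ, (∀ i, 0 < t i ∧ t i < ε) →
      Function.Injective
        (fun s : Σ i : Fin l, Fin (k i) => a s.1 + t s.1 • b s.1 s.2) := by
  have key : ∀ᶠ ε in nhdsWithin (0 : ℝ) (Set.Ioi 0), ∀ s s' : (Σ i : Fin l, Fin (k i)),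
      s.1 ≠ s'.1 → ε * (‖b s.1 s.2‖ + ‖b s'.1 s'.2‖) < ‖a s.1 - a s'.1‖ := by
    rw [Filter.eventually_all]
    intro s
    rw [Filter.eventually_all]
    intro s'
    by_cases h : s.1 = s'.1
    · exact Filter.Eventually.of_forall fun ε h' => absurd h h'
    · have hpos : 0 < ‖a s.1 - a s'.1‖ := norm_pos_iff.2 (sub_ne_zero.2 (ha.ne h))
      have hc : Filter.Tendsto (fun ε : ℝ => ε * (‖b s.1 s.2‖ + ‖b s'.1 s'.2‖))
          (nhds 0) (nhds (0 * (‖b s.1 s.2‖ + ‖b s'.1 s'.2‖))) :=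
        Filter.Tendsto.mul_const _ Filter.tendsto_id
      rw [zero_mul] at hc
      filter_upwards [nhdsWithin_le_nhds (hc.eventually_lt_const hpos)] with ε hε _
      exact hε
  obtain ⟨ε, hε, hε0⟩ := (key.and self_mem_nhdsWithin).exists
  refine ⟨ε, hε0, fun t ht s s' hs => ?_⟩
  have hs : a s.1 + t s.1 • b s.1 s.2 = a s'.1 + t s'.1 • b s'.1 s'.2 := hs
  by_cases h : s.1 = s'.1
  · obtain ⟨i, j⟩ := s
    obtain ⟨i', j'⟩ := s'
    dsimp only at h
    subst h
    have h2 := smul_right_injective _ (ht i).1.ne' (add_left_cancel hs)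
    have h3 : j = j' := hb i h2
    rw [h3]
  · exfalso
    have h1 := hε s s' h
    have h2 : a s.1 - a s'.1 = t s'.1 • b s'.1 s'.2 - t s.1 • b s.1 s.2 := by
      rw [sub_eq_sub_iff_add_eq_add, hs, add_comm]
    rw [h2] at h1
    have h3 := norm_sub_le (t s'.1 • b s'.1 s'.2) (t s.1 • b s.1 s.2)
    rw [norm_smul, norm_smul, Real.norm_of_nonneg (ht s.1).1.le,
      Real.norm_of_nonneg (ht s'.1).1.le] at h3
    have h4 := mul_le_mul_of_nonneg_right (ht s.1).2.le (norm_nonneg (b s.1 s.2))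
    have h5 := mul_le_mul_of_nonneg_right (ht s'.1).2.le (norm_nonneg (b s'.1 s'.2))
    linarith
end

section
/- Injectivity of the virtual-configuration map ω (the paper's Observation, for positive scales): fix a tree shape T all of whose internal vertices have at least two children. If two decorations of T, each assigning to every internal vertex a normalized injective configuration and a strictly positive scale, satisfy ω(T, decoration₁) = ω(T, decoration₂), then the two decorations assign the same configuration to every internal vertex and the same scale to every non-root internal vertex. -/
/-- Decorated planar rooted trees: a tree is either a leaf, or an internal
vertex decorated by a scale `t` and a configuration `z : Fin k → ℝ^m`, with a
family of `k` children. The scale at the root is never used. -/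
inductive DTree (m : ℕ) : Type
  | leaf : DTree m
  | node (k : ℕ) (t : ℝ) (z : Fin k → EuclideanSpace ℝ (Fin m))
      (children : Fin k → DTree m) : DTree m

namespace DTree

/-- The effective scale of a subtree: the scale at its root vertex, with the
convention that the scale of a leaf is `1`. -/
def scaleOf {m : ℕ} : DTree m → ℝ
  | leaf => 1
  | node _ t _ _ => t

/-- The output tuple `ω(T)` (as a list indexed by the leaves of `T`):
`ω(leaf)` is the single point `0`, and at an internal vertex with
configuration `z` and children `T₁, …, T_k`, `ω` is the concatenation over
`i` of the tuples with entries `z i + t_i • (entry of ω(T_i))`, where `t_i`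
is the effective scale of `T_i`. -/
noncomputable def omega {m : ℕ} : DTree m → List (EuclideanSpace ℝ (Fin m))
  | leaf => [0]
  | node k _ z c =>
      (List.ofFn fun i : Fin k =>
        (omega (c i)).map fun x => z i + scaleOf (c i) • x).flatten

/-- A tree is reduced if every internal vertex has at least two children. -/
def Reduced {m : ℕ} : DTree m → Prop
  | leaf => True
  | node k _ _ c => 2 ≤ k ∧ ∀ i, Reduced (c i)

/-- Every internal vertex carries an injective normalized configuration and a
strictly positive scale. -/
def ValidPos {m : ℕ} : DTree m → Prop
  | leaf => True
  | node _ t z c => Function.Injective z ∧ (∑ i, z i) = 0 ∧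
      (∑ i, ‖z i‖ ^ 2) = 1 ∧ 0 < t ∧ ∀ i, ValidPos (c i)

/-- Two decorated trees are two decorations of the same tree shape. -/
inductive SameShape {m : ℕ} : DTree m → DTree m → Prop
  | leaf : SameShape leaf leaf
  | node {k : ℕ} {t₁ t₂ : ℝ} {z₁ z₂ : Fin k → EuclideanSpace ℝ (Fin m)}
      {c₁ c₂ : Fin k → DTree m} (h : ∀ i, SameShape (c₁ i) (c₂ i)) :
      SameShape (node k t₁ z₁ c₁) (node k t₂ z₂ c₂)

/-- Two decorations of the same tree shape agree everywhere except possibly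
in the scale at the root: the configurations at all internal vertices agree
and the scales at all non-root internal vertices agree. -/
inductive EqExceptRootScale {m : ℕ} : DTree m → DTree m → Prop
  | leaf : EqExceptRootScale leaf leaf
  | node {k : ℕ} {t₁ t₂ : ℝ} {z : Fin k → EuclideanSpace ℝ (Fin m)}
      {c₁ c₂ : Fin k → DTree m} (h : ∀ i, c₁ i = c₂ i) :
      EqExceptRootScale (node k t₁ z c₁) (node k t₂ z c₂)

theorem omega_length_eq {m : ℕ} {T₁ T₂ : DTree m} (h : SameShape T₁ T₂) :
    (omega T₁).length = (omega T₂).length := by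
  induction h with
  | leaf => rfl
  | node h ih => simp [omega, List.length_flatten, List.map_ofFn, Function.comp_def, ih]

theorem eq_of_eqExcept {m : ℕ} {T₁ T₂ : DTree m} (h : EqExceptRootScale T₁ T₂)
    (hs : scaleOf T₁ = scaleOf T₂) : T₁ = T₂ := by
  cases h with
  | leaf => rfl
  | node h =>
    simp only [scaleOf] at hs
    subst hs
    rw [funext h]

theorem scaleOf_pos {m : ℕ} {T : DTree m} (h : ValidPos T) : 0 < scaleOf T := by
  cases T with
  | leaf => simp [scaleOf]
  | node k t z c => exact h.2.2.2.1

theorem omega_key {m : ℕ} {T₁ T₂ : DTree m} (h : SameShape T₁ T₂) :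
    ∀ (u v : EuclideanSpace ℝ (Fin m)) (a b : ℝ), 0 < a → 0 < b →
      ValidPos T₁ → ValidPos T₂ →
      (omega T₁).map (fun x => u + a • x) = (omega T₂).map (fun x => v + b • x) →
      u = v ∧ EqExceptRootScale T₁ T₂ ∧ ((T₁ = leaf ∧ T₂ = leaf) ∨ a = b) := by
  induction h with
  | leaf =>
    intro u v a b _ _ _ _ h
    simp [omega] at h
    exact ⟨h, .leaf, Or.inl ⟨rfl, rfl⟩⟩
  | @node k t₁ t₂ z₁ z₂ c₁ c₂ hs ih =>
    intro u v a b ha hb h₁ h₂ h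
    obtain ⟨-, hz₁, hn₁, -, hc₁⟩ := h₁
    obtain ⟨-, hz₂, hn₂, -, hc₂⟩ := h₂
    have hk : (k : ℝ) ≠ 0 := by
      rintro hk
      have : k = 0 := by exact_mod_cast hk
      subst this
      simp at hn₁
    simp only [omega, List.map_flatten, List.map_ofFn, Function.comp_def, List.map_map] at h
    have hb' := (List.eq_iff_flatten_eq).2 ⟨h, by
      simp [List.map_ofFn, Function.comp_def, fun i => omega_length_eq (hs i)]⟩
    have hblk := List.ofFn_injective hb'
    have key := fun i => ih i (u + a • z₁ i) (v + b • z₂ i) (a * scaleOf (c₁ i))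
      (b * scaleOf (c₂ i)) (mul_pos ha (scaleOf_pos (hc₁ i))) (mul_pos hb (scaleOf_pos (hc₂ i)))
      (hc₁ i) (hc₂ i) (by
        have := congrFun hblk i
        simpa only [smul_add, mul_smul, add_assoc] using this)
    have huv : u = v := by
      have hsum : ∑ i, (u + a • z₁ i) = ∑ i, (v + b • z₂ i) :=
        Finset.sum_congr rfl fun i _ => (key i).1
      simp only [Finset.sum_add_distrib, ← Finset.smul_sum, hz₁, hz₂, smul_zero, add_zero,
        Finset.sum_const, Finset.card_univ, Fintype.card_fin, ← Nat.cast_smul_eq_nsmul ℝ] at hsum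
      exact smul_right_injective _ hk hsum
    subst huv
    have hz : ∀ i, a • z₁ i = b • z₂ i := fun i => add_left_cancel (key i).1
    have hab : a = b := by
      have hsum : ∑ i, ‖a • z₁ i‖ ^ 2 = ∑ i, ‖b • z₂ i‖ ^ 2 :=
        Finset.sum_congr rfl fun i _ => by rw [hz i]
      simp only [norm_smul, mul_pow, ← Finset.mul_sum, hn₁, hn₂, mul_one, Real.norm_eq_abs,
        sq_abs] at hsum
      exact (pow_left_inj₀ ha.le hb.le two_ne_zero).1 hsum
    subst hab
    have hzz : z₁ = z₂ := funext fun i => smul_right_injective _ ha.ne' (hz i)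
    subst hzz
    refine ⟨rfl, .node fun i => eq_of_eqExcept (key i).2.1 ?_, Or.inr rfl⟩
    rcases (key i).2.2 with ⟨h1, h2⟩ | h
    · rw [h1, h2]
    · exact mul_left_cancel₀ ha.ne' h

/-- Injectivity of the virtual-configuration map `ω` (the paper's
Observation, for positive scales): two decorations of a reduced tree shape by
normalized injective configurations and strictly positive scales with the
same output tuple assign the same configuration to every internal vertex and
the same scale to every non-root internal vertex. -/
theorem omega_injective {m : ℕ} (T₁ T₂ : DTree m)
    (hshape : SameShape T₁ T₂)
    (hred : Reduced T₁) (hval₁ : ValidPos T₁) (hval₂ : ValidPos T₂)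
    (hω : omega T₁ = omega T₂) :
    EqExceptRootScale T₁ T₂ := by
  exact (omega_key hshape 0 0 1 1 one_pos one_pos hval₁ hval₂ (by rw [hω])).2.1

end DTree
end

section
/- Distinct output points force positive scales: fix a tree shape T all of whose internal vertices have at least two children, and a decoration of T by normalized injective configurations and nonnegative scales. If the output tuple ω(T) is injective (all its points are pairwise distinct), then the scale at every non-root internal vertex is strictly positive. -/
namespace DTree

/-- Every internal vertex carries an injective normalized configuration and a
nonnegative scale. -/
def ValidNonneg {m : ℕ} : DTree m → Prop
  | leaf => True
  | node _ t z c => Function.Injective z ∧ (∑ i, z i) = 0 ∧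
      (∑ i, ‖z i‖ ^ 2) = 1 ∧ 0 ≤ t ∧ ∀ i, ValidNonneg (c i)

/-- The scales at all internal vertices (including the root) are positive. -/
def PosScales {m : ℕ} : DTree m → Prop
  | leaf => True
  | node _ t _ c => 0 < t ∧ ∀ i, PosScales (c i)

/-- The scales at all non-root internal vertices are positive. -/
def NonRootPosScales {m : ℕ} : DTree m → Prop
  | leaf => True
  | node _ _ _ c => ∀ i, PosScales (c i)

theorem one_le_length_omega {m : ℕ} (T : DTree m) (h : Reduced T) :
    1 ≤ (omega T).length := by
  induction T with
  | leaf => simp [omega]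
  | node k t z c ih =>
    obtain ⟨hk, hc⟩ := h
    have h1 : ∑ _i : Fin k, 1 ≤ ∑ i : Fin k, (omega (c i)).length :=
      Finset.sum_le_sum fun i _ => ih i (hc i)
    simp only [Finset.sum_const, Finset.card_univ, Fintype.card_fin, smul_eq_mul] at h1
    simp only [omega, List.length_flatten, List.map_ofFn, List.sum_ofFn, Function.comp_apply,
      List.length_map]
    omega

theorem two_le_length_omega {m k : ℕ} (t : ℝ) (z : Fin k → EuclideanSpace ℝ (Fin m))
    (c : Fin k → DTree m) (h : Reduced (node k t z c)) :
    2 ≤ (omega (node k t z c)).length := by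
  obtain ⟨hk, hc⟩ := h
  have h1 : ∑ _i : Fin k, 1 ≤ ∑ i : Fin k, (omega (c i)).length :=
    Finset.sum_le_sum fun i _ => one_le_length_omega _ (hc i)
  simp only [Finset.sum_const, Finset.card_univ, Fintype.card_fin, smul_eq_mul] at h1
  simp only [omega, List.length_flatten, List.map_ofFn, List.sum_ofFn, Function.comp_apply,
    List.length_map]
  omega

/-- Distinct output points force positive scales: if a reduced tree is
decorated by normalized injective configurations and nonnegative scales and
its output tuple `ω(T)` has pairwise distinct entries, then the scale at
every non-root internal vertex is strictly positive. -/
theorem posScales_of_omega_nodup {m : ℕ} (T : DTree m)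
    (hred : Reduced T) (hval : ValidNonneg T)
    (hω : (omega T).Nodup) :
    NonRootPosScales T := by
  induction T with
  | leaf => trivial
  | node k t z c ih =>
    intro i
    have hmap : ((omega (c i)).map fun x => z i + scaleOf (c i) • x).Nodup := by
      simp only [omega] at hω
      exact (List.nodup_flatten.1 hω).1 _ (List.mem_ofFn.2 ⟨i, rfl⟩)
    have hn := ih i (hred.2 i) (hval.2.2.2.2 i) hmap.of_map
    have hr := hred.2 i
    have hv := hval.2.2.2.2 i
    generalize c i = S at hmap hn hr hv
    cases S with
    | leaf => trivial
    | node k' t' z' c' =>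
      refine ⟨lt_of_le_of_ne hv.2.2.2.1 ?_, hn⟩
      rintro rfl
      have h2 := two_le_length_omega _ _ _ hr
      simp only [scaleOf, zero_smul, add_zero, List.map_const', List.nodup_replicate] at hmap
      omega

end DTree
end

section
/- Existence of collar parameters (tree version of the paper's Lemma 6.2): fix a tree shape T all of whose internal vertices have at least two children, and fix an assignment of a normalized injective configuration to every internal vertex of T. Then there exists ε > 0 such that for every assignment of scales with 0 < t_v < ε at each non-root internal vertex v, the output tuple ω(T) of the resulting decoration is injective. -/
namespace DTree

/-- Every internal vertex carries an injective normalized configuration. -/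
def GoodConfigs {m : ℕ} : DTree m → Prop
  | leaf => True
  | node _ _ z c => Function.Injective z ∧ (∑ i, z i) = 0 ∧
      (∑ i, ‖z i‖ ^ 2) = 1 ∧ ∀ i, GoodConfigs (c i)

/-- Two decorated trees are decorations of the same tree shape with the same
configuration at every internal vertex (only the scales may differ). -/
inductive SameConfigs {m : ℕ} : DTree m → DTree m → Prop
  | leaf : SameConfigs leaf leaf
  | node {k : ℕ} {t₁ t₂ : ℝ} {z : Fin k → EuclideanSpace ℝ (Fin m)}
      {c₁ c₂ : Fin k → DTree m} (h : ∀ i, SameConfigs (c₁ i) (c₂ i)) :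
      SameConfigs (node k t₁ z c₁) (node k t₂ z c₂)

/-- The scales at all internal vertices (including the root) lie in `(0, ε)`. -/
def ScalesIn {m : ℕ} (ε : ℝ) : DTree m → Prop
  | leaf => True
  | node _ t _ c => 0 < t ∧ t < ε ∧ ∀ i, ScalesIn ε (c i)

/-- The scales at all non-root internal vertices lie in `(0, ε)`. -/
def NonRootScalesIn {m : ℕ} (ε : ℝ) : DTree m → Prop
  | leaf => True
  | node _ _ _ c => ∀ i, ScalesIn ε (c i)

theorem ScalesIn.nonRoot {m : ℕ} {ε : ℝ} {T : DTree m} (h : ScalesIn ε T) :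
    NonRootScalesIn ε T := by
  cases T with
  | leaf => trivial
  | node k t z c => exact h.2.2

theorem scaleOf_ne_zero {m : ℕ} {ε : ℝ} {T : DTree m} (h : ScalesIn ε T) :
    scaleOf T ≠ 0 := by
  cases T with
  | leaf => simp [scaleOf]
  | node k t z c => exact h.1.ne'

theorem norm_scale_lt {m : ℕ} {ε : ℝ} (hε : 0 < ε) {T : DTree m} (h : ScalesIn ε T)
    (hb : ∀ x ∈ omega T, ‖x‖ ≤ 2) (x : EuclideanSpace ℝ (Fin m)) (hx : x ∈ omega T) :
    ‖scaleOf T • x‖ < 2 * ε := by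
  cases T with
  | leaf =>
    simp only [omega, List.mem_singleton] at hx
    subst hx
    simpa using hε
  | node k t z c =>
    obtain ⟨h0, h1, -⟩ := h
    have h2 := hb x hx
    simp only [scaleOf, norm_smul, Real.norm_eq_abs, abs_of_pos h0]
    nlinarith

theorem eventually_collar {m : ℕ} (T : DTree m) (hcfg : GoodConfigs T) :
    ∀ᶠ ε in nhdsWithin (0 : ℝ) (Set.Ioi 0), ∀ T' : DTree m, SameConfigs T T' →
      NonRootScalesIn ε T' → (omega T').Nodup ∧ ∀ x ∈ omega T', ‖x‖ ≤ 2 := by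
  induction T with
  | leaf =>
    refine Filter.Eventually.of_forall fun ε T' hT _ => ?_
    cases hT
    simp [omega]
  | node k t z c ih =>
    obtain ⟨hinj, -, hsq, hc⟩ := hcfg
    have hz : ∀ i, ‖z i‖ ≤ 1 := by
      intro i
      have h1 : ‖z i‖ ^ 2 ≤ ∑ i, ‖z i‖ ^ 2 :=
        Finset.single_le_sum (f := fun i => ‖z i‖ ^ 2) (fun j _ => by positivity)
          (Finset.mem_univ i)
      rw [hsq] at h1
      nlinarith [norm_nonneg (z i)]
    have hih := Filter.eventually_all.2 fun i => ih i (hc i)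
    have hsmall : ∀ r : ℝ, 0 < r → ∀ᶠ ε in nhdsWithin (0 : ℝ) (Set.Ioi 0), ε < r :=
      fun r hr => nhdsWithin_le_nhds (gt_mem_nhds hr)
    have hsep : ∀ᶠ ε in nhdsWithin (0 : ℝ) (Set.Ioi 0), ∀ i j, i ≠ j →
        ε < ‖z i - z j‖ / 4 := by
      refine Filter.eventually_all.2 fun i => Filter.eventually_all.2 fun j => ?_
      by_cases hij : i = j
      · simp [hij]
      · have : 0 < ‖z i - z j‖ := norm_pos_iff.2 (sub_ne_zero.2 (hinj.ne hij))
        filter_upwards [hsmall _ (by positivity : 0 < ‖z i - z j‖ / 4)] with ε h _ using h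
    filter_upwards [hih, hsep, hsmall (1 / 2) (by norm_num), self_mem_nhdsWithin]
      with ε h1 h2 h3 hε T' hT hS
    have hε : 0 < ε := hε
    cases hT with
    | @node _ _ t₂ _ _ c₂ hsame =>
    have hS : ∀ i, ScalesIn ε (c₂ i) := hS
    have hI := fun i => h1 i (c₂ i) (hsame i) (hS i).nonRoot
    have hN := fun i => norm_scale_lt hε (hS i) (hI i).2
    constructor
    · rw [omega, List.nodup_flatten]
      constructor
      · intro l hl
        obtain ⟨i, rfl⟩ := (List.mem_ofFn' _ _).1 hl
        refine (hI i).1.map fun x y hxy => ?_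
        exact smul_right_injective _ (scaleOf_ne_zero (hS i)) (add_left_cancel hxy)
      · rw [List.pairwise_ofFn]
        intro i j hij
        intro a ha hb
        obtain ⟨x, hx, rfl⟩ := List.mem_map.1 ha
        obtain ⟨y, hy, hxy⟩ := List.mem_map.1 hb
        have e : z i - z j = scaleOf (c₂ j) • y - scaleOf (c₂ i) • x := by
          rw [sub_eq_sub_iff_add_eq_add, ← hxy, add_comm]
        have h4 := h2 i j hij.ne
        rw [e] at h4
        have h5 := norm_sub_le (scaleOf (c₂ j) • y) (scaleOf (c₂ i) • x)
        linarith [hN i x hx, hN j y hy]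
    · intro a ha
      rw [omega, List.mem_flatten] at ha
      obtain ⟨l, hl, ha⟩ := ha
      obtain ⟨i, rfl⟩ := (List.mem_ofFn' _ _).1 hl
      obtain ⟨x, hx, rfl⟩ := List.mem_map.1 ha
      linarith [norm_add_le (z i) (scaleOf (c₂ i) • x), hN i x hx, hz i]

/-- Existence of collar parameters (tree version of the paper's Lemma 6.2):
given a reduced tree shape decorated by normalized injective configurations,
there is an `ε > 0` such that for every choice of scales in `(0, ε)` at the
non-root internal vertices, the output tuple `ω` has pairwise distinct
entries. -/
theorem exists_collar_eps {m : ℕ} (T : DTree m)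
    (hred : Reduced T) (hcfg : GoodConfigs T) :
    ∃ ε > (0 : ℝ), ∀ T' : DTree m, SameConfigs T T' →
      NonRootScalesIn ε T' → (omega T').Nodup := by
  obtain ⟨ε, h, hε⟩ := ((eventually_collar T hcfg).and self_mem_nhdsWithin).exists
  exact ⟨ε, hε, fun T' hT hS => (h T' hT hS).1⟩

end DTree
end
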